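/- arXiv:hep-th/0010227 — 5 statements merged into one kernel-verified Lean document; each statement's English description precedes it below -/
import Mathlib

section
/- Let V : ℝ → ℂ be 2π-periodic with V(-φ) = V(φ) for all φ, let E ∈ ℂ, and let ψ : ℝ → ℂ be twice differentiable, 2π-periodic, and satisfy (H_{1/2} ψ)(φ) = E·ψ(φ) for all φ, where (H_{1/2} ψ)(φ) = -(1/2)·(ψ''(φ) - i·ψ'(φ) - (1/4)·ψ(φ)) + V(φ)·ψ(φ). Then χ(φ) = e^{iφ}·ψ(-φ) is twice differentiable, 2π-periodic, and satisfies (H_{1/2} χ)(φ) = E·χ(φ) for all φ. (At flux Φ = π the magnetic Bragg reflection is a symmetry of the planar rotor with reflection-invariant potential.) -/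
open Complex

/-- The planar-rotor Hamiltonian at flux parameter `ε = 1/2` with potential `V`:
`(H_{1/2} ψ)(φ) = -(1/2)·(ψ''(φ) - i·ψ'(φ) - (1/4)·ψ(φ)) + V(φ)·ψ(φ)`. -/
noncomputable def rotorHamHalf (V : ℝ → ℂ) (ψ : ℝ → ℂ) (φ : ℝ) : ℂ :=
  -(1/2 : ℂ) * (deriv (deriv ψ) φ - I * deriv ψ φ - (1/4 : ℂ) * ψ φ) + V φ * ψ φ

/-!
The reflection `ψ ↦ e^{2iεφ} ψ(-φ)` anticommutes with the covariant derivative `D = ∂_φ - iε`: the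
chain rule flips the sign of `∂_φ`, and differentiating the phase adds `2iε`, which flips that of
`-iε`. Hence it commutes with `D²`, and so with `-D²/2 + V` when `V` is even. This holds at every
flux; that the reflection preserves `2π`-periodicity is where `2ε` has to be an integer.
-/

open Function

/-- The covariant derivative `∂_φ - iε` of a planar rotor with flux parameter `ε`. -/
noncomputable def covariantDeriv (ε : ℂ) (ψ : ℝ → ℂ) (φ : ℝ) : ℂ :=
  deriv ψ φ - I * ε * ψ φ

/-- The planar-rotor Hamiltonian `-(1/2)(∂_φ - iε)² + V` with flux parameter `ε`. The square is
expanded, as in `rotorHamHalf`; for twice differentiable functions it is that of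
`covariantDeriv ε`, by `rotorHam_eq_covariantDeriv`. -/
noncomputable def rotorHam (ε : ℂ) (V ψ : ℝ → ℂ) (φ : ℝ) : ℂ :=
  -(1 / 2) * (deriv (deriv ψ) φ - 2 * ε * I * deriv ψ φ - ε ^ 2 * ψ φ) + V φ * ψ φ

/-- The magnetic Bragg reflection: the reflection `φ ↦ -φ` followed by the gauge transformation
that restores the flux parameter from `-ε` to `ε`. -/
noncomputable def braggReflection (ε : ℂ) (ψ : ℝ → ℂ) (φ : ℝ) : ℂ :=
  exp (2 * ε * (I * φ)) * ψ (-φ)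

section Flux

variable {ε : ℂ} {V ψ : ℝ → ℂ}

theorem hasDerivAt_braggReflection {ψ' : ℂ} {x : ℝ} (hψ : HasDerivAt ψ ψ' (-x)) :
    HasDerivAt (braggReflection ε ψ) (exp (2 * ε * (I * x)) * (2 * ε * I * ψ (-x) - ψ')) x := by
  have hphase : HasDerivAt (fun φ : ℝ => exp (2 * ε * (I * φ)))
      (exp (2 * ε * (I * x)) * (2 * ε * (I * 1))) x :=
    ((ofRealCLM.hasDerivAt.const_mul I).const_mul (2 * ε)).cexp
  have hneg : HasDerivAt (fun φ : ℝ => ψ (-φ)) (-ψ') x := by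
    simpa [comp_def] using hψ.scomp x (hasDerivAt_neg x)
  exact (hphase.mul hneg).congr_deriv (by ring)

theorem differentiable_braggReflection (hψ : Differentiable ℝ ψ) :
    Differentiable ℝ (braggReflection ε ψ) :=
  fun x => (hasDerivAt_braggReflection (hψ (-x)).hasDerivAt).differentiableAt

theorem deriv_braggReflection (hψ : Differentiable ℝ ψ) :
    deriv (braggReflection ε ψ) =
      braggReflection ε (fun φ => 2 * ε * I * ψ φ - deriv ψ φ) :=
  funext fun x => (hasDerivAt_braggReflection (hψ (-x)).hasDerivAt).deriv

theorem differentiable_deriv_braggReflection (hψ : Differentiable ℝ ψ)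
    (hψ' : Differentiable ℝ (deriv ψ)) :
    Differentiable ℝ (deriv (braggReflection ε ψ)) := by
  rw [deriv_braggReflection hψ]
  exact differentiable_braggReflection ((hψ.const_mul _).sub hψ')

theorem covariantDeriv_neg : covariantDeriv ε (-ψ) = -covariantDeriv ε ψ := by
  ext φ
  simp only [covariantDeriv, deriv.neg, Pi.neg_apply]
  ring

theorem differentiable_covariantDeriv (hψ : Differentiable ℝ ψ)
    (hψ' : Differentiable ℝ (deriv ψ)) :
    Differentiable ℝ (covariantDeriv ε ψ) :=
  hψ'.sub (hψ.const_mul _)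

theorem covariantDeriv_braggReflection (hψ : Differentiable ℝ ψ) :
    covariantDeriv ε (braggReflection ε ψ) = -braggReflection ε (covariantDeriv ε ψ) := by
  ext φ
  simp only [covariantDeriv, deriv_braggReflection hψ, braggReflection, Pi.neg_apply]
  ring

theorem covariantDeriv_covariantDeriv_braggReflection (hψ : Differentiable ℝ ψ)
    (hψ' : Differentiable ℝ (deriv ψ)) :
    covariantDeriv ε (covariantDeriv ε (braggReflection ε ψ)) =
      braggReflection ε (covariantDeriv ε (covariantDeriv ε ψ)) := by
  rw [covariantDeriv_braggReflection hψ, covariantDeriv_neg,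
    covariantDeriv_braggReflection (differentiable_covariantDeriv hψ hψ'), neg_neg]

theorem rotorHam_eq_covariantDeriv (hψ : Differentiable ℝ ψ)
    (hψ' : Differentiable ℝ (deriv ψ)) :
    rotorHam ε V ψ =
      fun φ => -(1 / 2) * covariantDeriv ε (covariantDeriv ε ψ) φ + V φ * ψ φ := by
  ext φ
  have hderiv : deriv (covariantDeriv ε ψ) φ = deriv (deriv ψ) φ - I * ε * deriv ψ φ :=
    ((hψ' φ).hasDerivAt.sub ((hψ φ).hasDerivAt.const_mul (I * ε))).deriv
  rw [rotorHam, covariantDeriv, hderiv, covariantDeriv]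
  linear_combination (1 / 2 * ε ^ 2 * ψ φ) * I_sq

theorem rotorHam_braggReflection (hV : V.Even) (hψ : Differentiable ℝ ψ)
    (hψ' : Differentiable ℝ (deriv ψ)) :
    rotorHam ε V (braggReflection ε ψ) = braggReflection ε (rotorHam ε V ψ) := by
  rw [rotorHam_eq_covariantDeriv hψ hψ',
    rotorHam_eq_covariantDeriv (differentiable_braggReflection hψ)
      (differentiable_deriv_braggReflection hψ hψ'),
    covariantDeriv_covariantDeriv_braggReflection hψ hψ']
  ext φ
  simp only [braggReflection, hV φ]
  ring

theorem periodic_braggReflection {n : ℤ} (hε : 2 * ε = n) (hψ : Periodic ψ (2 * Real.pi)) :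
    Periodic (braggReflection ε ψ) (2 * Real.pi) := by
  intro φ
  have hphase : exp (2 * ε * (I * ↑(φ + 2 * Real.pi))) = exp (2 * ε * (I * φ)) := by
    rw [hε, ← exp_periodic.int_mul n (n * (I * φ))]
    push_cast
    ring_nf
  have hreflect : ψ (-(φ + 2 * Real.pi)) = ψ (-φ) := by
    rw [neg_add', hψ.sub_eq]
  rw [braggReflection, hphase, hreflect, braggReflection]

theorem bragg_reflection_symmetry_at_half_flux_general {n : ℤ} (hε : 2 * ε = n) (hV : V.Even)
    {E : ℂ} (hψ : Differentiable ℝ ψ) (hψ' : Differentiable ℝ (deriv ψ))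
    (hper : Periodic ψ (2 * Real.pi)) (heigen : ∀ φ, rotorHam ε V ψ φ = E * ψ φ) :
    Differentiable ℝ (braggReflection ε ψ) ∧
    Differentiable ℝ (deriv (braggReflection ε ψ)) ∧
    Periodic (braggReflection ε ψ) (2 * Real.pi) ∧
    ∀ φ, rotorHam ε V (braggReflection ε ψ) φ = E * braggReflection ε ψ φ := by
  refine ⟨differentiable_braggReflection hψ, differentiable_deriv_braggReflection hψ hψ',
    periodic_braggReflection hε hper, fun φ => ?_⟩
  rw [rotorHam_braggReflection hV hψ hψ', braggReflection, heigen, braggReflection, mul_left_comm]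

end Flux

theorem rotorHam_one_half : rotorHam (1 / 2) = rotorHamHalf := by
  ext V ψ φ
  rw [rotorHam, rotorHamHalf]
  ring

theorem braggReflection_one_half (ψ : ℝ → ℂ) :
    braggReflection (1 / 2) ψ = fun φ : ℝ => exp (I * φ) * ψ (-φ) := by
  ext φ
  simp [braggReflection]

/-- **At flux `Φ = π` the magnetic Bragg reflection is a symmetry of the planar rotor
with reflection-invariant potential.** If `V` is `2π`-periodic and reflection invariant,
and `ψ` is a twice differentiable `2π`-periodic eigenfunction of `H_{1/2}` with eigenvalue
`E`, then `χ(φ) = e^{iφ}·ψ(-φ)` is a twice differentiable `2π`-periodic eigenfunction of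
`H_{1/2}` with the same eigenvalue. -/
theorem bragg_reflection_symmetry_at_half_flux (V : ℝ → ℂ)
    (hVper : ∀ φ : ℝ, V (φ + 2 * Real.pi) = V φ)
    (hVrefl : ∀ φ : ℝ, V (-φ) = V φ)
    (E : ℂ) (ψ : ℝ → ℂ)
    (hf1 : ∀ x : ℝ, DifferentiableAt ℝ ψ x)
    (hf2 : ∀ x : ℝ, DifferentiableAt ℝ (deriv ψ) x)
    (hper : ∀ φ : ℝ, ψ (φ + 2 * Real.pi) = ψ φ)
    (heq : ∀ φ : ℝ, rotorHamHalf V ψ φ = E * ψ φ) :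
    (∀ x : ℝ, DifferentiableAt ℝ (fun φ : ℝ => Complex.exp (I * (φ : ℂ)) * ψ (-φ)) x) ∧
    (∀ x : ℝ,
      DifferentiableAt ℝ (deriv (fun φ : ℝ => Complex.exp (I * (φ : ℂ)) * ψ (-φ))) x) ∧
    (∀ φ : ℝ, Complex.exp (I * ((φ + 2 * Real.pi : ℝ) : ℂ)) * ψ (-(φ + 2 * Real.pi))
        = Complex.exp (I * (φ : ℂ)) * ψ (-φ)) ∧
    (∀ φ : ℝ, rotorHamHalf V (fun φ' : ℝ => Complex.exp (I * (φ' : ℂ)) * ψ (-φ')) φ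
        = E * (Complex.exp (I * (φ : ℂ)) * ψ (-φ))) := by
  have h := bragg_reflection_symmetry_at_half_flux_general (ε := 1 / 2) (n := 1) (by norm_num)
    hVrefl hf1 hf2 hper (by rwa [rotorHam_one_half])
  rwa [rotorHam_one_half, braggReflection_one_half] at h
end

section
/- Let ψ : ℝ × ℝ → ℂ satisfy the k = 1 magnetic boundary conditions on the torus: ψ(x + 2π, y) = e^{iy/2}·ψ(x, y) and ψ(x, y + 2π) = e^{-ix/2}·ψ(x, y) for all x, y ∈ ℝ. If ψ is even under the reflection P_{++}, i.e. ψ(-x, -y) = ψ(x, y) for all x, y, then ψ(π, π) = 0. (A P_{++}-even state on the magnetic torus with unit Chern class necessarily has a node at the crossing point φ_{--} of the two non-contractible circles with holonomy -1.) -/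
open Complex

/-! Translating around both cycles from `(-π, -π)` to `(π, π)` multiplies a magnetic state by the
holonomy phase `exp (i k π) = (-1) ^ k`, while the reflection about the origin exchanges the same
two points with the phase `ε`, the parity of the state. When the two phases differ, the common
value has to vanish; for `k = 1` and an even state they are `-1` and `1`. -/

section

variable {E : Type*} [AddCommGroup E] [Module ℂ E]

/-- The boundary conditions, in the symmetric gauge, of a state on the torus `(ℝ / 2πℤ)²` with
first Chern class `k`, that is, in the uniform magnetic field `k / (2π)`. States take values in an
arbitrary complex vector space, so that internal degrees of freedom are allowed. -/
structure IsMagneticState (k : ℤ) (ψ : ℝ × ℝ → E) : Prop where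
  translate_fst (x y : ℝ) : ψ (x + 2 * Real.pi, y) = exp (I * (k * y) / 2) • ψ (x, y)
  translate_snd (x y : ℝ) : ψ (x, y + 2 * Real.pi) = exp (-I * (k * x) / 2) • ψ (x, y)

variable {k : ℤ} {ψ : ℝ × ℝ → E}

namespace IsMagneticState

theorem translate_fst_snd (hψ : IsMagneticState k ψ) (x y : ℝ) :
    ψ (x + 2 * Real.pi, y + 2 * Real.pi) =
      ((-1) ^ k * exp (I * (k * (y - x)) / 2)) • ψ (x, y) := by
  have hphase : exp (I * (k * ↑(y + 2 * Real.pi)) / 2) * exp (-I * (k * x) / 2) =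
      (-1) ^ k * exp (I * (k * (y - x)) / 2) := by
    rw [← exp_pi_mul_I, ← exp_int_mul, ← exp_add, ← exp_add]
    congr 1
    push_cast
    ring
  rw [hψ.translate_fst, hψ.translate_snd, smul_smul, hphase]

theorem apply_pi_pi (hψ : IsMagneticState k ψ) :
    ψ (Real.pi, Real.pi) = (-1 : ℂ) ^ k • ψ (-Real.pi, -Real.pi) := by
  have hshift : -Real.pi + 2 * Real.pi = Real.pi := by ring
  simpa [hshift] using hψ.translate_fst_snd (-Real.pi) (-Real.pi)

end IsMagneticState

theorem even_state_node_at_pi_pi_general (hψ : IsMagneticState k ψ) {ε : ℂ}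
    (hparity : ∀ x y : ℝ, ψ (-x, -y) = ε • ψ (x, y)) (hε : (-1) ^ k * ε ≠ 1) :
    ψ (Real.pi, Real.pi) = 0 := by
  have hfixed : ((-1) ^ k * ε) • ψ (Real.pi, Real.pi) = ψ (Real.pi, Real.pi) := by
    rw [mul_smul, ← hparity, ← hψ.apply_pi_pi]
  by_contra hne
  exact hε (smul_left_injective ℂ hne (hfixed.trans (one_smul ℂ _).symm))

end

/-- **A `P₊₊`-even state on the magnetic torus with unit Chern class has a node at
`φ₋₋ = (π, π)`**, the crossing point of the two non-contractible circles with
holonomy `-1`. -/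
theorem even_state_node_at_pi_pi (ψ : ℝ × ℝ → ℂ)
    (hbc1 : ∀ x y : ℝ, ψ (x + 2 * Real.pi, y) = Complex.exp (I * (y : ℂ) / 2) * ψ (x, y))
    (hbc2 : ∀ x y : ℝ, ψ (x, y + 2 * Real.pi) = Complex.exp (-I * (x : ℂ) / 2) * ψ (x, y))
    (heven : ∀ x y : ℝ, ψ (-x, -y) = ψ (x, y)) :
    ψ (Real.pi, Real.pi) = 0 := by
  have hψ : IsMagneticState 1 ψ := ⟨by simpa using hbc1, by simpa using hbc2⟩
  exact even_state_node_at_pi_pi_general hψ (ε := 1) (by simpa using heven) (by norm_num)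
end

section
/- Let ψ : ℝ × ℝ → ℂ satisfy the k = 1 magnetic boundary conditions on the torus: ψ(x + 2π, y) = e^{iy/2}·ψ(x, y) and ψ(x, y + 2π) = e^{-ix/2}·ψ(x, y) for all x, y ∈ ℝ. Then for all x, y ∈ ℝ, ψ(2π - x, 2π - y) = -e^{i(x-y)/2}·ψ(-x, -y). (The quantum reflection about the point φ_{--} = (π,π) coincides, on states satisfying the k = 1 magnetic boundary conditions, with minus the quantum reflection about the origin; hence the parity operators U(P_{++}) and U(P_{--}) differ by a sign even though they are the same transformation of the torus.) -/
/-!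
A reflection about a half-period `(πm, πn)` is the reflection about the origin followed by the
lattice translation by `(2πm, 2πn)`. The phase acquired under a translation in `x` depends on `y`,
so it is evaluated at the already translated point `y + 2πn`; this contributes the constant
`e^{iπkmn} = (-1)^{kmn}`, which is `-1` for `k = m = n = 1`.
-/

open Complex

section ZPowSMul

variable {A G₀ E : Type*} [AddGroup A] [GroupWithZero G₀] [MulAction G₀ E]

theorem map_add_zsmul_eq_zpow_smul {f : A → E} {c : A} {a : G₀} (ha : a ≠ 0)
    (hf : ∀ x, f (x + c) = a • f x) (m : ℤ) (x : A) : f (x + m • c) = a ^ m • f x := by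
  induction m with
  | zero => simp
  | succ m ih =>
    rw [add_one_zsmul, ← add_assoc, hf, ih, smul_smul, ← zpow_one_add₀ ha, add_comm]
  | pred m ih =>
    have hpred : a • f (x + (-(m : ℤ) - 1) • c) = a ^ (-(m : ℤ)) • f x := by
      rw [← hf, add_assoc, ← add_one_zsmul, sub_add_cancel, ih]
    rw [← inv_smul_smul₀ ha (f (x + _)), hpred, smul_smul, ← zpow_neg_one, ← zpow_add₀ ha,
      neg_add_eq_sub, sub_eq_add_neg]

end ZPowSMul

theorem exp_int_mul_pi_mul_I (m : ℤ) : exp (m * (Real.pi * I)) = (-1) ^ m := by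
  rw [exp_int_mul, exp_pi_mul_I]

/-- The magnetic boundary conditions of first Chern class `k` on the torus of side `2π`, in the
symmetric gauge, for a state `ψ` written on the universal cover. The values of `ψ` may lie in any
type `E` on which the phases in `ℂ` act. -/
structure IsMagneticState_s13 {E : Type*} [MulAction ℂ E] (k : ℤ) (ψ : ℝ × ℝ → E) : Prop where
  add_two_pi_fst : ∀ x y : ℝ, ψ (x + 2 * Real.pi, y) = exp (I * k * y / 2) • ψ (x, y)
  add_two_pi_snd : ∀ x y : ℝ, ψ (x, y + 2 * Real.pi) = exp (-I * k * x / 2) • ψ (x, y)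

namespace IsMagneticState_s13

variable {E : Type*} [MulAction ℂ E] {k : ℤ} {ψ : ℝ × ℝ → E}

theorem add_int_mul_two_pi_fst (hψ : IsMagneticState_s13 k ψ) (m : ℤ) (x y : ℝ) :
    ψ (x + m * (2 * Real.pi), y) = exp (I * k * m * y / 2) • ψ (x, y) := by
  have h := map_add_zsmul_eq_zpow_smul (f := fun x ↦ ψ (x, y)) (exp_ne_zero _)
    (hψ.add_two_pi_fst · y) m x
  rw [zsmul_eq_mul, ← exp_int_mul] at h
  rw [h]
  ring_nf

theorem add_int_mul_two_pi_snd (hψ : IsMagneticState_s13 k ψ) (n : ℤ) (x y : ℝ) :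
    ψ (x, y + n * (2 * Real.pi)) = exp (-I * k * n * x / 2) • ψ (x, y) := by
  have h := map_add_zsmul_eq_zpow_smul (f := fun y ↦ ψ (x, y)) (exp_ne_zero _)
    (hψ.add_two_pi_snd x) n y
  rw [zsmul_eq_mul, ← exp_int_mul] at h
  rw [h]
  ring_nf

theorem add_int_mul_two_pi (hψ : IsMagneticState_s13 k ψ) (m n : ℤ) (x y : ℝ) :
    ψ (x + m * (2 * Real.pi), y + n * (2 * Real.pi)) =
      ((-1) ^ (k * m * n) * exp (I * k * (m * y - n * x) / 2)) • ψ (x, y) := by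
  rw [hψ.add_int_mul_two_pi_fst, hψ.add_int_mul_two_pi_snd, smul_smul, ← exp_add,
    ← exp_int_mul_pi_mul_I, ← exp_add]
  congr 2
  push_cast
  ring

end IsMagneticState_s13

theorem reflection_about_pi_pi_vs_origin_general {E : Type*} [MulAction ℂ E] {k : ℤ}
    {ψ : ℝ × ℝ → E} (hψ : IsMagneticState_s13 k ψ) (m n : ℤ) (x y : ℝ) :
    ψ (m * (2 * Real.pi) - x, n * (2 * Real.pi) - y) =
      ((-1) ^ (k * m * n) * exp (I * k * (n * x - m * y) / 2)) • ψ (-x, -y) := by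
  rw [sub_eq_neg_add, sub_eq_neg_add, hψ.add_int_mul_two_pi]
  push_cast
  ring_nf

/-- **The quantum reflection about `φ₋₋ = (π,π)` equals minus the quantum reflection about
the origin** on states satisfying the `k = 1` magnetic boundary conditions:
`ψ(2π - x, 2π - y) = -e^{i(x-y)/2}·ψ(-x, -y)`; hence the parity operators `U(P₊₊)` and
`U(P₋₋)` differ by a sign even though they implement the same transformation of the
torus. -/
theorem reflection_about_pi_pi_vs_origin (ψ : ℝ × ℝ → ℂ)
    (hbc1 : ∀ x y : ℝ, ψ (x + 2 * Real.pi, y) = Complex.exp (I * (y : ℂ) / 2) * ψ (x, y))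
    (hbc2 : ∀ x y : ℝ, ψ (x, y + 2 * Real.pi) = Complex.exp (-I * (x : ℂ) / 2) * ψ (x, y)) :
    ∀ x y : ℝ, ψ (2 * Real.pi - x, 2 * Real.pi - y)
      = -Complex.exp (I * ((x : ℂ) - (y : ℂ)) / 2) * ψ (-x, -y) := by
  have hψ : IsMagneticState_s13 1 ψ := ⟨by simpa using hbc1, by simpa using hbc2⟩
  simpa using reflection_about_pi_pi_vs_origin_general hψ 1 1
end

section
/- Define ψ : ℝ × ℝ → ℂ by ψ(x, y) = e^{ixy/(4π)} · Σ_{m ∈ ℤ} e^{imx} · e^{-(2πm + y)²/(4π)} (the series over m ∈ ℤ converges absolutely for every (x,y)). Then ψ satisfies the k = 1 magnetic boundary conditions on the torus: ψ(x + 2π, y) = e^{iy/2}·ψ(x, y) and ψ(x, y + 2π) = e^{-ix/2}·ψ(x, y) for all x, y ∈ ℝ. (The explicit lowest Landau level wavefunction for unit magnetic charge is a well-defined section of the line bundle with first Chern class 1.) -/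
open Complex

/-- The `m`-th term of the lowest Landau level series: `e^{imx}·e^{-(2πm + y)²/(4π)}`. -/
noncomputable def lllTerm (x y : ℝ) (m : ℤ) : ℂ :=
  Complex.exp (I * (m : ℂ) * (x : ℂ))
    * (Real.exp (-(2 * Real.pi * (m : ℝ) + y)^2 / (4 * Real.pi)) : ℂ)

/-- The lowest Landau level wavefunction on the torus for unit magnetic charge:
`ψ(x, y) = e^{ixy/(4π)} · Σ_{m ∈ ℤ} e^{imx}·e^{-(2πm + y)²/(4π)}`. -/
noncomputable def lll (x y : ℝ) : ℂ :=
  Complex.exp (I * (x : ℂ) * (y : ℂ) / (4 * (Real.pi : ℂ))) * ∑' m : ℤ, lllTerm x y m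

/-!
Completing the square turns the wavefunction into the Jacobi theta function `θ₂(z, i)` at
`z = (x + iy)/(2π)`, multiplied by the gauge factor `e^{iy(x + iy)/(4π)}`. Translating `x` or `y` by
`2π` translates `z` by the period `1` or the quasi-period `i` of `θ₂(·, i)`; the change of the gauge
factor is the whole phase in the first case, and in the second it combines with the multiplier of
`θ₂` to a pure phase.
-/

/-- The Jacobi theta function of modulus `τ` in the symmetric gauge: the section
`e^{πib(a + bτ)}·θ₂(a + bτ, τ)` of the line bundle with first Chern class `1` on the torus
`ℂ/(ℤ + ℤτ)`, written in the lattice coordinates `(a, b)` of the point `a + bτ`. The coordinates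
are allowed to be complex; for `im τ ≤ 0` the theta series diverges and the value is `0`. -/
noncomputable def symmGaugeTheta (τ a b : ℂ) : ℂ :=
  cexp (Real.pi * I * (b * (a + b * τ))) * jacobiTheta₂ (a + b * τ) τ

theorem symmGaugeTheta_add_one_left (τ a b : ℂ) :
    symmGaugeTheta τ (a + 1) b = cexp (Real.pi * I * b) * symmGaugeTheta τ a b := by
  have h_shift : a + 1 + b * τ = a + b * τ + 1 := by ring
  rw [symmGaugeTheta, symmGaugeTheta, h_shift, jacobiTheta₂_add_left,
    ← mul_assoc (cexp _), ← exp_add]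
  congr 2
  ring

theorem symmGaugeTheta_add_one_right (τ a b : ℂ) :
    symmGaugeTheta τ a (b + 1) = cexp (-(Real.pi * I * a)) * symmGaugeTheta τ a b := by
  have h_shift : a + (b + 1) * τ = a + b * τ + τ := by ring
  rw [symmGaugeTheta, symmGaugeTheta, h_shift, jacobiTheta₂_add_left',
    ← mul_assoc (cexp _), ← mul_assoc (cexp _), ← exp_add, ← exp_add]
  congr 2
  ring

theorem lllTerm_eq_exp_mul_jacobiTheta₂_term (x y : ℝ) (m : ℤ) :
    lllTerm x y m = cexp (-(y : ℂ) ^ 2 / (4 * Real.pi)) *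
      jacobiTheta₂_term m (x / (2 * Real.pi) + y / (2 * Real.pi) * I) I := by
  have hπ : (Real.pi : ℂ) ≠ 0 := ofReal_ne_zero.2 Real.pi_ne_zero
  rw [lllTerm, jacobiTheta₂_term, ofReal_exp, ← exp_add, ← exp_add]
  congr 1
  push_cast
  field_simp
  linear_combination (-4 * m * y * Real.pi - 4 * m ^ 2 * Real.pi ^ 2 : ℂ) * I_sq

theorem summable_lllTerm (x y : ℝ) : Summable (lllTerm x y) := by
  simp_rw [funext (lllTerm_eq_exp_mul_jacobiTheta₂_term x y)]
  exact ((summable_jacobiTheta₂_term_iff _ I).2 (by simp)).mul_left _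

theorem lll_eq_symmGaugeTheta (x y : ℝ) :
    lll x y = symmGaugeTheta I (x / (2 * Real.pi)) (y / (2 * Real.pi)) := by
  have hπ : (Real.pi : ℂ) ≠ 0 := ofReal_ne_zero.2 Real.pi_ne_zero
  simp_rw [lll, lllTerm_eq_exp_mul_jacobiTheta₂_term]
  rw [tsum_mul_left, ← jacobiTheta₂, symmGaugeTheta, ← mul_assoc, ← exp_add]
  congr 2
  field_simp
  linear_combination (-4 * y ^ 2 : ℂ) * I_sq

theorem ofReal_add_two_pi_div_two_pi (t : ℝ) :
    ((t + 2 * Real.pi : ℝ) : ℂ) / (2 * Real.pi) = t / (2 * Real.pi) + 1 := by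
  have hπ : (2 * Real.pi : ℂ) ≠ 0 := mod_cast Real.two_pi_pos.ne'
  push_cast
  rw [add_div, div_self hπ]

/-- **The explicit lowest Landau level wavefunction for unit magnetic charge is a
well-defined section of the line bundle with first Chern class `1`**: the series
converges absolutely for every `(x, y)`, and `ψ` satisfies the `k = 1` magnetic boundary
conditions `ψ(x + 2π, y) = e^{iy/2}·ψ(x, y)` and `ψ(x, y + 2π) = e^{-ix/2}·ψ(x, y)`. -/
theorem lll_magnetic_boundary_conditions :
    (∀ x y : ℝ, Summable fun m : ℤ => ‖lllTerm x y m‖) ∧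
    (∀ x y : ℝ, lll (x + 2 * Real.pi) y = Complex.exp (I * (y : ℂ) / 2) * lll x y) ∧
    (∀ x y : ℝ, lll x (y + 2 * Real.pi) = Complex.exp (-I * (x : ℂ) / 2) * lll x y) := by
  have hπ : (Real.pi : ℂ) ≠ 0 := ofReal_ne_zero.2 Real.pi_ne_zero
  have h_phase (t : ℂ) : Real.pi * I * (t / (2 * Real.pi)) = I * t / 2 := by field_simp
  refine ⟨fun x y => (summable_lllTerm x y).norm, fun x y => ?_, fun x y => ?_⟩
  · rw [lll_eq_symmGaugeTheta, lll_eq_symmGaugeTheta, ofReal_add_two_pi_div_two_pi,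
      symmGaugeTheta_add_one_left, h_phase]
  · rw [lll_eq_symmGaugeTheta, lll_eq_symmGaugeTheta, ofReal_add_two_pi_div_two_pi,
      symmGaugeTheta_add_one_right, h_phase, neg_mul, neg_div]
end

section
/- The family of real numbers indexed by m ∈ ℤ given by a_m = (-1)^m · e^{-π(m + 1/2)²} is summable, and Σ_{m ∈ ℤ} (-1)^m · e^{-π(m + 1/2)²} = 0. (This is the vanishing of the Jacobi-theta-type series controlling the value of the lowest Landau level wavefunction at the point (π, π) of the magnetic torus with unit charge.) -/
/-!
The terms are, up to sign, values of the even function `x ↦ e^{-πx²}` at the half-integers, and the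
reflection `m ↦ -1 - m` of `ℤ` is `x ↦ -x` on the half-integers `x = m + 1/2`. Since it reverses the
parity of `m`, it negates every term, so the sum is equal to its own opposite.
-/

theorem tsum_eq_zero_of_apply_equiv_eq_neg {ι M : Type*} [AddCommGroup M] [IsAddTorsionFree M]
    [TopologicalSpace M] [IsTopologicalAddGroup M] [T2Space M] {f : ι → M} (e : ι ≃ ι)
    (hf : ∀ i, f (e i) = -f i) : ∑' i, f i = 0 := by
  refine self_eq_neg.mp ?_
  calc ∑' i, f i = ∑' i, f (e i) := (e.tsum_eq f).symm
    _ = ∑' i, -f i := tsum_congr hf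
    _ = -∑' i, f i := tsum_neg

theorem neg_one_zpow_neg_one_sub {R : Type*} [DivisionRing R] (m : ℤ) :
    (-1 : R) ^ (-1 - m) = -(-1) ^ m := by
  rw [zpow_sub₀ (neg_ne_zero.mpr one_ne_zero), zpow_neg_one, inv_neg_one, div_eq_mul_inv,
    ← inv_zpow, inv_neg_one, neg_one_mul]

theorem tsum_neg_one_zpow_mul_add_half_eq_zero {K R : Type*} [Field K] [NeZero (2 : K)]
    [DivisionRing R] [CharZero R] [TopologicalSpace R] [IsTopologicalAddGroup R] [T2Space R]
    {g : K → R} (hg : g.Even) : ∑' m : ℤ, (-1 : R) ^ m * g (m + 1 / 2) = 0 := by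
  refine tsum_eq_zero_of_apply_equiv_eq_neg (Equiv.subLeft (-1)) fun m => ?_
  have hreflect : ((-1 - m : ℤ) : K) + 1 / 2 = -(m + 1 / 2) := by
    push_cast
    linear_combination add_halves (1 : K)
  rw [Equiv.subLeft_apply, neg_one_zpow_neg_one_sub, hreflect, hg, neg_mul]

theorem summable_neg_one_zpow_mul {R : Type*} [DivisionRing R] [UniformSpace R]
    [IsUniformAddGroup R] [CompleteSpace R] {f : ℤ → R} (hf : Summable f) :
    Summable fun m : ℤ => (-1 : R) ^ m * f m := by
  let evens : Set ℤ := {m | Even m}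
  refine ((hf.indicator evens).sub (hf.indicator evensᶜ)).congr fun m => ?_
  by_cases hm : Even m <;> simp [evens, neg_one_zpow_eq_ite, hm]

theorem summable_exp_neg_pi_mul_int_add_sq_mul (a : ℝ) {t : ℝ} (ht : 0 < t) :
    Summable fun m : ℤ => Real.exp (-Real.pi * (m + a) ^ 2 * t) :=
  (HurwitzKernelBounds.summable_f_int 0 a ht).congr fun m => by
    rw [HurwitzKernelBounds.f_int, pow_zero, one_mul]

/-- **Vanishing of the Jacobi-theta-type series controlling the value of the lowest
Landau level wavefunction at the point `(π, π)` of the magnetic torus with unit charge:**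
the family `a_m = (-1)^m · e^{-π(m + 1/2)²}` indexed by `m ∈ ℤ` is summable and
`Σ_{m ∈ ℤ} (-1)^m · e^{-π(m + 1/2)²} = 0`. -/
theorem theta_series_vanishes :
    Summable (fun m : ℤ => (-1 : ℝ) ^ m * Real.exp (-Real.pi * ((m : ℝ) + 1/2)^2)) ∧
    ∑' m : ℤ, (-1 : ℝ) ^ m * Real.exp (-Real.pi * ((m : ℝ) + 1/2)^2) = 0 := by
  have hsummable : Summable fun m : ℤ => Real.exp (-Real.pi * ((m : ℝ) + 1 / 2) ^ 2) := by
    simpa only [mul_one] using summable_exp_neg_pi_mul_int_add_sq_mul (1 / 2) one_pos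
  have heven : Function.Even fun x : ℝ => Real.exp (-Real.pi * x ^ 2) := fun x => by
    simp only [neg_sq]
  exact ⟨summable_neg_one_zpow_mul hsummable, tsum_neg_one_zpow_mul_add_half_eq_zero heven⟩
end
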